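/- The subgroups of GL(2,ℂ) generated by the sets {A₁, A₂}, {A₂, A₃}, {A₁, A₃}, and {A₁, A₃(A₂A₁)²} are finite of orders 8, 6, 6, and 12 respectively (these are the reflection groups G(2,1,2), G(3,3,2), G(3,3,2), and G(6,6,2)). -/

import Mathlib

open Matrix

noncomputable section

/-- i√2. -/
def s2 : ℂ := Complex.I * Real.sqrt 2

/-- R₁ = [[1,0,0],[0,1,0],[0,1−i√2,−1]]. -/
def R₁ : Matrix (Fin 3) (Fin 3) ℂ := !![1, 0, 0; 0, 1, 0; 0, 1 - s2, -1]

/-- R₂ = [[1,0,0],[0,−1+i√2,2],[0,1+i√2,1−i√2]]. -/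
def R₂ : Matrix (Fin 3) (Fin 3) ℂ := !![1, 0, 0; 0, -1 + s2, 2; 0, 1 + s2, 1 - s2]

/-- R₃ = [[1,0,0],[(1+i√2)/2,1,−1−i√2],[1,0,−1]]. -/
def R₃ : Matrix (Fin 3) (Fin 3) ℂ := !![1, 0, 0; (1 + s2) / 2, 1, -1 - s2; 1, 0, -1]

/-- The translation matrix T_v for v = (v₁, v₂). -/
def T (v₁ v₂ : ℂ) : Matrix (Fin 3) (Fin 3) ℂ := !![1, 0, 0; v₁, 1, 0; v₂, 0, 1]

/-- A₁, the linear part of R₁. -/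
def A₁ : Matrix (Fin 2) (Fin 2) ℂ := !![1, 0; 1 - s2, -1]

/-- A₂, the linear part of R₂. -/
def A₂ : Matrix (Fin 2) (Fin 2) ℂ := !![-1 + s2, 2; 1 + s2, 1 - s2]

/-- A₃, the linear part of R₃. -/
def A₃ : Matrix (Fin 2) (Fin 2) ℂ := !![1, -1 - s2; 0, -1]

end

open scoped MatrixGroups

/-- The subgroup of GL(2,ℂ) generated by (the invertible-matrix lifts of) a set of
2×2 matrices. -/
noncomputable def genGL2 (S : Set (Matrix (Fin 2) (Fin 2) ℂ)) : Subgroup (GL (Fin 2) ℂ) :=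
  Subgroup.closure {g : GL (Fin 2) ℂ | (g : Matrix (Fin 2) (Fin 2) ℂ) ∈ S}

/-!
Each `Aᵢ` has trace `0` and determinant `-1`, so it is a reflection of order two. Two involutions
`a`, `b` generate a dihedral group of order `2 * orderOf (a * b)` as soon as `a` is not a power of
`a * b`; for two reflections the determinant guarantees this, being `-1` on `a` and `1` on `a * b`.
By Cayley–Hamilton the order of `a * b` is `n` when its characteristic polynomial is the `n`-th
cyclotomic polynomial, and the traces of the products give `n = 4, 3, 3`. Finally
`(A₂ * A₁) ^ 2 = -1`, so the fourth group is generated by `A₁` and `-A₃`, where `n = 6`.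
-/

section Involutions

variable {G : Type*} [Group G] {a b : G}

theorem mul_mem_zpowers_or_mem_zpowers_of_mem_closure_pair (ha : a * a = 1) (hb : b * b = 1) {x : G}
    (hx : x ∈ Subgroup.closure {a, b}) :
    x * a ∈ Subgroup.zpowers (a * b) ∨ x ∈ Subgroup.zpowers (a * b) := by
  have ha_inv : a⁻¹ = a := inv_eq_of_mul_eq_one_left ha
  have hb_inv : b⁻¹ = b := inv_eq_of_mul_eq_one_left hb
  have hab : a * b ∈ Subgroup.zpowers (a * b) := Subgroup.mem_zpowers _
  have hba : b * a ∈ Subgroup.zpowers (a * b) := by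
    simpa only [_root_.mul_inv_rev, ha_inv, hb_inv] using inv_mem hab
  have mul_generator : ∀ x, ∀ y ∈ ({a, b} : Set G),
      (x * a ∈ Subgroup.zpowers (a * b) ∨ x ∈ Subgroup.zpowers (a * b)) →
      x * y * a ∈ Subgroup.zpowers (a * b) ∨ x * y ∈ Subgroup.zpowers (a * b) := by
    rintro x y (rfl | rfl) (hxa | hx)
    · exact Or.inr hxa
    · exact Or.inl (by rwa [mul_assoc, ha, mul_one])
    · have hxb : x * a * (a * y) = x * y := by rw [mul_assoc, ← mul_assoc a, ha, one_mul]
      exact Or.inr (hxb ▸ mul_mem hxa hab)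
    · exact Or.inl (by simpa only [mul_assoc] using mul_mem hx hba)
  have inv_generator : ∀ y ∈ ({a, b} : Set G), y⁻¹ = y := by
    rintro y (rfl | rfl) <;> assumption
  induction hx using Subgroup.closure_induction_right with
  | one => exact Or.inr (one_mem _)
  | mul_right x _ y hy ih => exact mul_generator x y hy ih
  | mul_inv_cancel x _ y hy ih => exact (inv_generator y hy).symm ▸ mul_generator x y hy ih

theorem relIndex_zpowers_mul_closure_pair (ha : a * a = 1) (hb : b * b = 1)
    (hmem : a ∉ Subgroup.zpowers (a * b)) :
    (Subgroup.zpowers (a * b)).relIndex (Subgroup.closure {a, b}) = 2 :=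
  Subgroup.relIndex_eq_two_iff_exists_notMem_and.2
    ⟨a, Subgroup.subset_closure (Set.mem_insert a {b}), hmem,
      fun _ hx => mul_mem_zpowers_or_mem_zpowers_of_mem_closure_pair ha hb hx⟩

theorem card_closure_pair_eq_two_mul_orderOf (ha : a * a = 1) (hb : b * b = 1)
    (hmem : a ∉ Subgroup.zpowers (a * b)) :
    Nat.card (Subgroup.closure {a, b}) = 2 * orderOf (a * b) := by
  have hle : Subgroup.zpowers (a * b) ≤ Subgroup.closure {a, b} :=
    Subgroup.zpowers_le.2 <| mul_mem (Subgroup.subset_closure (Set.mem_insert a {b}))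
      (Subgroup.subset_closure (Set.mem_insert_of_mem a rfl))
  calc Nat.card (Subgroup.closure {a, b})
      = Nat.card (Subgroup.zpowers (a * b)) *
          (Subgroup.zpowers (a * b)).relIndex (Subgroup.closure {a, b}) := by
        simpa only [Subgroup.relIndex_bot_left] using
          (Subgroup.relIndex_mul_relIndex ⊥ _ _ bot_le hle).symm
    _ = 2 * orderOf (a * b) := by
        rw [relIndex_zpowers_mul_closure_pair ha hb hmem, Nat.card_zpowers, mul_comm]

theorem notMem_zpowers_of_map_ne_one {N : Type*} [Monoid N] (f : G →* N) (ha : f a ≠ 1)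
    (hb : f b = 1) : a ∉ Subgroup.zpowers b :=
  fun h => ha <| MonoidHom.mem_ker.1 <| Subgroup.zpowers_le.2 (MonoidHom.mem_ker.2 hb) h

theorem card_closure_units_pair_eq_two_mul_orderOf {M N : Type*} [Monoid M] [Monoid N] {a b : M}
    (ha : a * a = 1) (hb : b * b = 1) (f : M →* N) (hfa : f a ≠ 1) (hfab : f (a * b) = 1) :
    Nat.card (Subgroup.closure {u : Mˣ | (u : M) ∈ ({a, b} : Set M)}) = 2 * orderOf (a * b) := by
  let u : Mˣ := ⟨a, a, ha, ha⟩
  let v : Mˣ := ⟨b, b, hb, hb⟩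
  have hset : {w : Mˣ | (w : M) ∈ ({a, b} : Set M)} = {u, v} := by
    ext w
    simp only [Set.mem_ofPred_eq, Set.mem_insert_iff, Set.mem_singleton_iff, Units.ext_iff, u, v]
  have hu : u ∉ Subgroup.zpowers (u * v) :=
    notMem_zpowers_of_map_ne_one (f.comp (Units.coeHom M)) hfa hfab
  rw [hset, card_closure_pair_eq_two_mul_orderOf (Units.ext ha) (Units.ext hb) hu,
    ← orderOf_units, Units.val_mul]

end Involutions

section Cyclotomic

open Polynomial

theorem cyclotomic_four (R : Type*) [CommRing R] : cyclotomic 4 R = X ^ 2 + 1 :=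
  calc cyclotomic 4 R = ∑ i ∈ Finset.range 2, (X ^ 2 ^ 1) ^ i :=
        cyclotomic_prime_pow_eq_geom_sum (n := 1) Nat.prime_two
    _ = X ^ 2 + 1 := by rw [pow_one, geom_sum_two]

-- `X ^ n - 1` is separable, so `cyclotomic n R` is coprime to `X ^ d - 1` for proper divisors `d`
-- of `n`; hence `x` is not a root of the latter.
theorem orderOf_eq_of_aeval_cyclotomic_eq_zero {R A : Type*} [CommRing R] [Ring A] [Nontrivial A]
    [Algebra R A] {n : ℕ} (hn : IsUnit (n : R)) {x : A} (hx : aeval x (cyclotomic n R) = 0) :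
    orderOf x = n := by
  have : Nontrivial R := (algebraMap R A).domain_nontrivial
  have hn₀ : n ≠ 0 := by
    rintro rfl
    simp at hn
  have hpow : aeval x (X ^ n - 1 : R[X]) = 0 :=
    aeval_eq_zero_of_dvd_aeval_eq_zero (cyclotomic.dvd_X_pow_sub_one n R) hx
  have hdvd : orderOf x ∣ n :=
    orderOf_dvd_of_pow_eq_one (by simpa [sub_eq_zero] using hpow)
  by_contra hne
  have hproper : orderOf x ∈ n.properDivisors :=
    Nat.mem_properDivisors.2 ⟨hdvd, (Nat.le_of_dvd hn₀.bot_lt hdvd).lt_of_ne hne⟩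
  have hsep : (X ^ n - 1 : R[X]).Separable := by
    simpa only [Units.val_one, C_1] using separable_X_pow_sub_C_unit (1 : Rˣ) hn
  have hcop : IsCoprime (X ^ orderOf x - 1) (cyclotomic n R) :=
    (hsep.of_dvd (X_pow_sub_one_mul_cyclotomic_dvd_X_pow_sub_one_of_dvd R hproper)).isCoprime
  obtain ⟨p, q, hpq⟩ := hcop
  simpa [hx, pow_orderOf_eq_one] using congrArg (aeval x) hpq

theorem orderOf_eq_of_charpoly_eq_cyclotomic {R ι : Type*} [CommRing R] [Nontrivial R] [Fintype ι]
    [DecidableEq ι] [Nonempty ι] {n : ℕ} (hn : IsUnit (n : R)) {M : Matrix ι ι R}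
    (hM : M.charpoly = cyclotomic n R) : orderOf M = n :=
  orderOf_eq_of_aeval_cyclotomic_eq_zero hn (hM ▸ M.aeval_self_charpoly)

end Cyclotomic

/-- A reflection of order two of the plane `R²`, encoded through its characteristic polynomial
`X ^ 2 - 1`; over a field in which `2 ≠ 0` this says that the eigenvalues are `1` and `-1`. -/
structure IsPlaneReflection {R : Type*} [CommRing R] (M : Matrix (Fin 2) (Fin 2) R) : Prop where
  trace_eq : M.trace = 0
  det_eq : M.det = -1

namespace IsPlaneReflection

open Polynomial

variable {R : Type*} [CommRing R] {M N : Matrix (Fin 2) (Fin 2) R}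

theorem mul_self (hM : IsPlaneReflection M) : M * M = 1 := by
  nontriviality R
  have h := M.aeval_self_charpoly
  rw [charpoly_fin_two, hM.trace_eq, hM.det_eq] at h
  simpa [← sub_eq_add_neg, sub_eq_zero, sq] using h

protected theorem neg (hM : IsPlaneReflection M) : IsPlaneReflection (-M) where
  trace_eq := by rw [trace_neg, hM.trace_eq, neg_zero]
  det_eq := by rw [det_neg, hM.det_eq, Fintype.card_fin, neg_one_sq, one_mul]

theorem det_mul_eq_one (hM : IsPlaneReflection M) (hN : IsPlaneReflection N) :
    (M * N).det = 1 := by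
  rw [det_mul, hM.det_eq, hN.det_eq, neg_mul_neg, one_mul]

theorem charpoly_mul [Nontrivial R] (hM : IsPlaneReflection M) (hN : IsPlaneReflection N) :
    (M * N).charpoly = X ^ 2 - C (M * N).trace * X + 1 := by
  rw [charpoly_fin_two, hM.det_mul_eq_one hN, C_1]

theorem card_closure_pair (hR : (-1 : R) ≠ 1) (hM : IsPlaneReflection M)
    (hN : IsPlaneReflection N) {n : ℕ} (hn : IsUnit (n : R))
    (hMN : (M * N).charpoly = cyclotomic n R) :
    Nat.card (Subgroup.closure
      {g : GL (Fin 2) R | (g : Matrix (Fin 2) (Fin 2) R) ∈ ({M, N} : Set _)}) = 2 * n := by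
  have : Nontrivial R := ⟨-1, 1, hR⟩
  rw [card_closure_units_pair_eq_two_mul_orderOf hM.mul_self hN.mul_self detMonoidHom
    (hM.det_eq.trans_ne hR) (hM.det_mul_eq_one hN), orderOf_eq_of_charpoly_eq_cyclotomic hn hMN]

end IsPlaneReflection

theorem card_genGL2_pair {M N : Matrix (Fin 2) (Fin 2) ℂ} (hM : IsPlaneReflection M)
    (hN : IsPlaneReflection N) {n : ℕ} (hn : n ≠ 0)
    (hMN : (M * N).charpoly = Polynomial.cyclotomic n ℂ) : Nat.card (genGL2 {M, N}) = 2 * n :=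
  hM.card_closure_pair (by norm_num) hN (Nat.cast_ne_zero.2 hn).isUnit hMN

section Generators

open Polynomial

theorem s2_sq : s2 ^ 2 = -2 := by
  rw [s2, mul_pow, Complex.I_sq, ← Complex.ofReal_pow, Real.sq_sqrt zero_le_two]
  norm_num

theorem isPlaneReflection_A₁ : IsPlaneReflection A₁ where
  trace_eq := by simp [A₁, trace_fin_two]
  det_eq := by simp [A₁, det_fin_two]

theorem isPlaneReflection_A₂ : IsPlaneReflection A₂ where
  trace_eq := by simp [A₂, trace_fin_two]
  det_eq := by
    rw [A₂, det_fin_two_of]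
    linear_combination -s2_sq

theorem isPlaneReflection_A₃ : IsPlaneReflection A₃ where
  trace_eq := by simp [A₃, trace_fin_two]
  det_eq := by simp [A₃, det_fin_two]

theorem trace_A₁_mul_A₂ : (A₁ * A₂).trace = 0 := by
  simp only [A₁, A₂, mul_fin_two, trace_fin_two_of]
  ring

theorem trace_A₂_mul_A₃ : (A₂ * A₃).trace = -1 := by
  simp only [A₂, A₃, mul_fin_two, trace_fin_two_of]
  linear_combination -s2_sq

theorem trace_A₁_mul_A₃ : (A₁ * A₃).trace = -1 := by
  simp only [A₁, A₃, mul_fin_two, trace_fin_two_of]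
  linear_combination s2_sq

theorem charpoly_A₁_mul_A₂ : (A₁ * A₂).charpoly = cyclotomic 4 ℂ := by
  simp [isPlaneReflection_A₁.charpoly_mul isPlaneReflection_A₂, trace_A₁_mul_A₂, cyclotomic_four]

theorem charpoly_A₂_mul_A₃ : (A₂ * A₃).charpoly = cyclotomic 3 ℂ := by
  simp [isPlaneReflection_A₂.charpoly_mul isPlaneReflection_A₃, trace_A₂_mul_A₃, cyclotomic_three]

theorem charpoly_A₁_mul_A₃ : (A₁ * A₃).charpoly = cyclotomic 3 ℂ := by
  simp [isPlaneReflection_A₁.charpoly_mul isPlaneReflection_A₃, trace_A₁_mul_A₃, cyclotomic_three]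

theorem charpoly_A₁_mul_neg_A₃ : (A₁ * -A₃).charpoly = cyclotomic 6 ℂ := by
  rw [isPlaneReflection_A₁.charpoly_mul isPlaneReflection_A₃.neg, mul_neg, trace_neg,
    trace_A₁_mul_A₃, neg_neg, C_1, one_mul, cyclotomic_six]

theorem A₂_mul_A₁_sq : (A₂ * A₁) ^ 2 = -1 := by
  have h := (A₂ * A₁).aeval_self_charpoly
  rw [charpoly_mul_comm, charpoly_A₁_mul_A₂, cyclotomic_four] at h
  simpa [add_eq_zero_iff_eq_neg] using h

end Generators

/-- the subgroups generated by {A₁,A₂}, {A₂,A₃}, {A₁,A₃} and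
{A₁, A₃(A₂A₁)²} are finite of orders 8, 6, 6 and 12 respectively. -/
theorem stmt_17 :
    Nat.card (genGL2 {A₁, A₂}) = 8 ∧
    Nat.card (genGL2 {A₂, A₃}) = 6 ∧
    Nat.card (genGL2 {A₁, A₃}) = 6 ∧
    Nat.card (genGL2 {A₁, A₃ * (A₂ * A₁) ^ 2}) = 12 := by
  have hneg : A₃ * (A₂ * A₁) ^ 2 = -A₃ := by rw [A₂_mul_A₁_sq, mul_neg_one]
  rw [hneg]
  exact ⟨card_genGL2_pair isPlaneReflection_A₁ isPlaneReflection_A₂ four_ne_zero charpoly_A₁_mul_A₂,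
    card_genGL2_pair isPlaneReflection_A₂ isPlaneReflection_A₃ three_ne_zero charpoly_A₂_mul_A₃,
    card_genGL2_pair isPlaneReflection_A₁ isPlaneReflection_A₃ three_ne_zero charpoly_A₁_mul_A₃,
    card_genGL2_pair isPlaneReflection_A₁ isPlaneReflection_A₃.neg (by decide)
      charpoly_A₁_mul_neg_A₃⟩
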